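/- arXiv:1410.1004 — 13 statements merged into one kernel-verified Lean document; each statement's English description precedes it below -/
import Mathlib

section
/- Suppose the reals p1g, q1g, c11, c22, c12, s12 satisfy the four power-flow equations of the two-bus system. Then s12 = −α, c12 = c22 − β, p1g = −G·(c11 − c22) − G·β + B·α, and q1g = B·(c11 − c22) + B·β + G·α. -/
/-- Two-bus one-generator system: solving the power-flow equations expresses
`(p1g, q1g, c12, s12)` in terms of `(c11, c22)`. -/
theorem two_bus_linear_system_solution
    (G B p2d q2d : ℝ) (hG : G < 0) (hB : 0 < B)
    (α β : ℝ)
    (hα : α = (B * p2d + G * q2d) / (B ^ 2 + G ^ 2))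
    (hβ : β = (G * p2d - B * q2d) / (B ^ 2 + G ^ 2))
    (p1g q1g c11 c22 c12 s12 : ℝ)
    (h1 : p1g + G * c11 - G * c12 + B * s12 = 0)
    (h2 : q1g - B * c11 + B * c12 + G * s12 = 0)
    (h3 : G * c22 - G * c12 - B * s12 = p2d)
    (h4 : -B * c22 + B * c12 - G * s12 = q2d) :
    s12 = -α ∧ c12 = c22 - β ∧
    p1g = -G * (c11 - c22) - G * β + B * α ∧
    q1g = B * (c11 - c22) + B * β + G * α := by
  have hD : B ^ 2 + G ^ 2 ≠ 0 := by positivity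
  -- The bus-2 equations form a linear system in `(c22 - c12, s12)` with determinant
  -- `-(B ^ 2 + G ^ 2)`; `α` and `β` are its solution by Cramer's rule, up to sign.
  have ha : α = -s12 := by
    rw [hα, div_eq_iff hD, ← h3, ← h4]
    ring
  have hb : β = c22 - c12 := by
    rw [hβ, div_eq_iff hD, ← h3, ← h4]
    ring
  rw [ha, hb]
  refine ⟨by ring, by ring, ?_, ?_⟩
  · linear_combination h1
  · linear_combination h2
end

section
/- Let p1min and q1min be reals and define Δ = max{(p1min + G·β − B·α)/(−G), (q1min − B·β − G·α)/B}. Suppose the reals p1g, q1g, c11, c22, c12, s12 satisfy the four power-flow equations of the two-bus system. Then the generation lower bounds p1g ≥ p1min and q1g ≥ q1min hold simultaneously if and only if c11 − c22 ≥ Δ. -/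
/-- Two-bus one-generator system: the generation lower bounds `p1g ≥ p1min` and
`q1g ≥ q1min` hold simultaneously iff `c11 - c22 ≥ Δ`, where `Δ` is the
effective lower bound. -/
theorem two_bus_effective_lower_bound
    (G B p2d q2d : ℝ) (hG : G < 0) (hB : 0 < B)
    (α β : ℝ)
    (hα : α = (B * p2d + G * q2d) / (B ^ 2 + G ^ 2))
    (hβ : β = (G * p2d - B * q2d) / (B ^ 2 + G ^ 2))
    (p1min q1min Δ : ℝ)
    (hΔ : Δ = max ((p1min + G * β - B * α) / (-G)) ((q1min - B * β - G * α) / B))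
    (p1g q1g c11 c22 c12 s12 : ℝ)
    (h1 : p1g + G * c11 - G * c12 + B * s12 = 0)
    (h2 : q1g - B * c11 + B * c12 + G * s12 = 0)
    (h3 : G * c22 - G * c12 - B * s12 = p2d)
    (h4 : -B * c22 + B * c12 - G * s12 = q2d) :
    (p1g ≥ p1min ∧ q1g ≥ q1min) ↔ c11 - c22 ≥ Δ := by
  have hD : B ^ 2 + G ^ 2 ≠ 0 := by positivity
  -- The equations at bus 2 are linear in `(c22 - c12, s12)` with determinant `-(B ^ 2 + G ^ 2)`;
  -- `α` and `β` are their solution.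
  have hα' : α = -s12 := by
    rw [hα, div_eq_iff hD, ← h3, ← h4]; ring
  have hβ' : β = c22 - c12 := by
    rw [hβ, div_eq_iff hD, ← h3, ← h4]; ring
  -- Hence `p1g = -G * (c11 - c22) - G * β + B * α` and `q1g = B * (c11 - c22) + B * β + G * α`.
  rw [hΔ, ge_iff_le, ge_iff_le, ge_iff_le, max_le_iff, div_le_iff₀ (neg_pos.mpr hG),
    div_le_iff₀ hB, hα', hβ']
  constructor <;> rintro ⟨hp, hq⟩ <;> constructor <;> linarith
end

section
/- Suppose the reals p1g, q1g, c11, c22, c12, s12 satisfy the four power-flow equations of the two-bus system and c22 > 0. Then the coupling equality c12² + s12² = c11·c22 holds if and only if c11 = c22 − 2β + (α² + β²)/c22. -/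
/-- Two-bus one-generator system: on solutions of the power-flow equations with
`c22 > 0`, the coupling equality `c12² + s12² = c11·c22` is equivalent to the
hyperbola equation `c11 = c22 - 2β + (α² + β²)/c22`. -/
theorem two_bus_coupling_equality_iff_hyperbola
    (G B p2d q2d : ℝ) (hG : G < 0) (hB : 0 < B)
    (α β : ℝ)
    (hα : α = (B * p2d + G * q2d) / (B ^ 2 + G ^ 2))
    (hβ : β = (G * p2d - B * q2d) / (B ^ 2 + G ^ 2))
    (p1g q1g c11 c22 c12 s12 : ℝ)
    (h1 : p1g + G * c11 - G * c12 + B * s12 = 0)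
    (h2 : q1g - B * c11 + B * c12 + G * s12 = 0)
    (h3 : G * c22 - G * c12 - B * s12 = p2d)
    (h4 : -B * c22 + B * c12 - G * s12 = q2d)
    (hc22 : 0 < c22) :
    c12 ^ 2 + s12 ^ 2 = c11 * c22 ↔
      c11 = c22 - 2 * β + (α ^ 2 + β ^ 2) / c22 := by
  have hD : B ^ 2 + G ^ 2 ≠ 0 := by positivity
  -- The load equations at bus 2 are an invertible linear system for `(c22 - c12, -s12)`,
  -- with solution `(β, α)`.
  have hs : α = -s12 := by
    rw [hα, div_eq_iff hD, ← h3, ← h4]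
    ring
  have hc : β = c22 - c12 := by
    rw [hβ, div_eq_iff hD, ← h3, ← h4]
    ring
  have key : c22 - 2 * β + (α ^ 2 + β ^ 2) / c22 = (c12 ^ 2 + s12 ^ 2) / c22 := by
    rw [hs, hc]
    field_simp
    ring
  rw [key, eq_div_iff hc22.ne', eq_comm]
end

section
/- Suppose the reals p1g, q1g, c11, c22, c12, s12 satisfy the four power-flow equations of the two-bus system and c22 > 0. Then the relaxed (SOCP) coupling inequality c12² + s12² ≤ c11·c22 holds if and only if c11 ≥ c22 − 2β + (α² + β²)/c22. -/
/-- Two-bus one-generator system: on solutions of the power-flow equations with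
`c22 > 0`, the relaxed SOCP coupling inequality `c12² + s12² ≤ c11·c22` is
equivalent to `c11 ≥ c22 - 2β + (α² + β²)/c22`. -/
theorem two_bus_socp_coupling_iff
    (G B p2d q2d : ℝ) (hG : G < 0) (hB : 0 < B)
    (α β : ℝ)
    (hα : α = (B * p2d + G * q2d) / (B ^ 2 + G ^ 2))
    (hβ : β = (G * p2d - B * q2d) / (B ^ 2 + G ^ 2))
    (p1g q1g c11 c22 c12 s12 : ℝ)
    (h1 : p1g + G * c11 - G * c12 + B * s12 = 0)
    (h2 : q1g - B * c11 + B * c12 + G * s12 = 0)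
    (h3 : G * c22 - G * c12 - B * s12 = p2d)
    (h4 : -B * c22 + B * c12 - G * s12 = q2d)
    (hc22 : 0 < c22) :
    c12 ^ 2 + s12 ^ 2 ≤ c11 * c22 ↔
      c11 ≥ c22 - 2 * β + (α ^ 2 + β ^ 2) / c22 := by
  have hD : B ^ 2 + G ^ 2 ≠ 0 := by positivity
  -- The load equations at bus 2 are linear in `c12`, `s12` with determinant `B² + G²`;
  -- solving them gives `s12 = -α` and `c12 = c22 - β`.
  have hs : α = -s12 := by
    rw [hα, div_eq_iff hD, ← h3, ← h4]; ring
  have hc : β = c22 - c12 := by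
    rw [hβ, div_eq_iff hD, ← h3, ← h4]; ring
  have key : c22 - 2 * β + (α ^ 2 + β ^ 2) / c22 = (c12 ^ 2 + s12 ^ 2) / c22 := by
    rw [hs, hc]; field_simp; ring
  rw [key, ge_iff_le, div_le_iff₀ hc22]
end

section
/- Define (x^O, y^O) as follows: if h(u2) ≤ u1, set (x^O, y^O) = (h(u2), u2); otherwise assume 2β + u1 > 0 and (2β + u1)² ≥ 4(α² + β²), and set x^O = u1 and y^O = (2β + u1 + √((2β + u1)² − 4(α² + β²)))/2. Assume furthermore l1 ≤ x^O, l2 ≤ y^O ≤ u2, and Δ ≤ x^O − y^O. Then (x^O, y^O) belongs to P_OPF, every (x, y) ∈ P_SOCP satisfies x − y ≥ x^O − y^O, and (x^O, y^O) is the unique minimizer of x − y over P_SOCP. Consequently the minimum of x − y over P_OPF equals the minimum of x − y over P_SOCP, both equal to x^O − y^O; i.e., the SOCP relaxation is exact (Theorem 1, case 1, first alternative). -/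
/-!
Write `k = α² + β² > 0`. On the SOCP feasible set `x - y ≥ h(y) - y = k / y - 2β`, and the right-hand
side is strictly decreasing in `y > 0`. Hence everything reduces to two facts: `(xO, yO)` lies on
the hyperbola `x = h(y)`, and `yO` is the largest `y`-coordinate of an SOCP feasible point. The
second is the bound `y ≤ u2` when `h(u2) ≤ u1`; otherwise `h(y) ≤ u1` is the quadratic inequality
`y² - (2β + u1) y + k ≤ 0`, whose larger root is `yO` (`le_root_of_hyp_le`, `hyp_root`).
-/

/-- The hyperbola `x = h(y) = y - 2β + (α² + β²)/y`. -/
noncomputable def hyp (α β y : ℝ) : ℝ := y - 2 * β + (α ^ 2 + β ^ 2) / y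

/-- The projected OPF feasible set in the `(c11, c22)` space. -/
def POPF (α β l1 u1 l2 u2 Δ : ℝ) : Set (ℝ × ℝ) :=
  {p | l1 ≤ p.1 ∧ p.1 ≤ u1 ∧ l2 ≤ p.2 ∧ p.2 ≤ u2 ∧ p.1 - p.2 ≥ Δ ∧
       p.1 = hyp α β p.2}

/-- The projected SOCP feasible set in the `(c11, c22)` space. -/
def PSOCP (α β l1 u1 l2 u2 Δ : ℝ) : Set (ℝ × ℝ) :=
  {p | l1 ≤ p.1 ∧ p.1 ≤ u1 ∧ l2 ≤ p.2 ∧ p.2 ≤ u2 ∧ p.1 - p.2 ≥ Δ ∧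
       p.1 ≥ hyp α β p.2}

theorem le_root_of_hyp_le {α β u y : ℝ} (hy : 0 < y) (h : hyp α β y ≤ u) :
    y ≤ (2 * β + u + Real.sqrt ((2 * β + u) ^ 2 - 4 * (α ^ 2 + β ^ 2))) / 2 := by
  have hk : (α ^ 2 + β ^ 2) / y ≤ 2 * β + u - y := by
    unfold hyp at h
    linarith
  rw [div_le_iff₀ hy] at hk
  have hs : 2 * y - (2 * β + u) ≤ Real.sqrt ((2 * β + u) ^ 2 - 4 * (α ^ 2 + β ^ 2)) :=
    Real.le_sqrt_of_sq_le (by nlinarith)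
  linarith

theorem hyp_root {α β u y : ℝ} (hy : 0 < y) (hD : 4 * (α ^ 2 + β ^ 2) ≤ (2 * β + u) ^ 2)
    (h : y = (2 * β + u + Real.sqrt ((2 * β + u) ^ 2 - 4 * (α ^ 2 + β ^ 2))) / 2) :
    u = hyp α β y := by
  have hs := Real.sq_sqrt (sub_nonneg.2 hD)
  have he : Real.sqrt ((2 * β + u) ^ 2 - 4 * (α ^ 2 + β ^ 2)) = 2 * y - (2 * β + u) := by linarith
  rw [he] at hs
  have hk : (α ^ 2 + β ^ 2) / y = 2 * β + u - y := by
    rw [div_eq_iff hy.ne']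
    linarith
  unfold hyp
  linarith

/-- Theorem 1, case 1, first alternative: when `Δ` is small enough, the point
`(x^O, y^O)` is the unique minimizer of `x - y` over the SOCP relaxation, it is
OPF feasible, and both problems have the same optimal value `x^O - y^O`:
the SOCP relaxation is exact. -/
theorem socp_exact_small_Delta
    (α β Δ l1 u1 l2 u2 : ℝ)
    (hαβ : 0 < α ^ 2 + β ^ 2)
    (hl1 : 0 < l1) (hu1 : l1 ≤ u1) (hl2 : 0 < l2) (hu2 : l2 ≤ u2)
    (xO yO : ℝ)
    (hO : (hyp α β u2 ≤ u1 ∧ xO = hyp α β u2 ∧ yO = u2) ∨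
          (u1 < hyp α β u2 ∧ 0 < 2 * β + u1 ∧
           4 * (α ^ 2 + β ^ 2) ≤ (2 * β + u1) ^ 2 ∧
           xO = u1 ∧
           yO = (2 * β + u1 +
                  Real.sqrt ((2 * β + u1) ^ 2 - 4 * (α ^ 2 + β ^ 2))) / 2))
    (hxOl : l1 ≤ xO) (hyOl : l2 ≤ yO) (hyOu : yO ≤ u2)
    (hΔ : Δ ≤ xO - yO) :
    (xO, yO) ∈ POPF α β l1 u1 l2 u2 Δ ∧
    (∀ p ∈ PSOCP α β l1 u1 l2 u2 Δ, xO - yO ≤ p.1 - p.2) ∧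
    (∀ p ∈ PSOCP α β l1 u1 l2 u2 Δ, p.1 - p.2 = xO - yO → p = (xO, yO)) ∧
    IsLeast ((fun p : ℝ × ℝ => p.1 - p.2) '' POPF α β l1 u1 l2 u2 Δ)
      (xO - yO) ∧
    IsLeast ((fun p : ℝ × ℝ => p.1 - p.2) '' PSOCP α β l1 u1 l2 u2 Δ)
      (xO - yO) := by
  have hyO : 0 < yO := hl2.trans_le hyOl
  have hx : xO = hyp α β yO := by
    rcases hO with ⟨-, h, rfl⟩ | ⟨-, -, hD, rfl, hy⟩
    · exact h
    · exact hyp_root hyO hD hy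
  have hxu : xO ≤ u1 := by
    rcases hO with ⟨h, rfl, -⟩ | ⟨-, -, -, rfl, -⟩
    · exact h
    · exact le_rfl
  have hmax : ∀ p ∈ PSOCP α β l1 u1 l2 u2 Δ, p.2 ≤ yO := by
    rintro p ⟨-, h1, h2, h3, -, h4⟩
    rcases hO with ⟨-, -, rfl⟩ | ⟨-, -, -, -, rfl⟩
    · exact h3
    · exact le_root_of_hyp_le (hl2.trans_le h2) (h4.le.trans h1)
  have hmem : (xO, yO) ∈ POPF α β l1 u1 l2 u2 Δ := ⟨hxOl, hxu, hyOl, hyOu, hΔ, hx⟩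
  have hsub : POPF α β l1 u1 l2 u2 Δ ⊆ PSOCP α β l1 u1 l2 u2 Δ :=
    fun p ⟨h1, h2, h3, h4, h5, h6⟩ => ⟨h1, h2, h3, h4, h5, h6.ge⟩
  have hmin : ∀ p ∈ PSOCP α β l1 u1 l2 u2 Δ, xO - yO ≤ p.1 - p.2 := by
    intro p hp
    obtain ⟨-, -, h2, -, -, h4⟩ := id hp
    have hdiv := div_le_div_of_nonneg_left hαβ.le (hl2.trans_le h2) (hmax p hp)
    unfold hyp at hx h4
    linarith
  refine ⟨hmem, hmin, ?_, ⟨⟨_, hmem, rfl⟩, ?_⟩, ⟨⟨_, hsub hmem, rfl⟩, ?_⟩⟩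
  · intro p hp heq
    obtain ⟨-, -, h2, -, -, h4⟩ := id hp
    have hy : p.2 = yO := by
      refine (hmax p hp).antisymm (not_lt.1 fun hlt => ?_)
      have hdiv := div_lt_div_of_pos_left hαβ (hl2.trans_le h2) hlt
      unfold hyp at hx h4
      linarith
    exact Prod.ext (by linarith) hy
  · rintro _ ⟨p, hp, rfl⟩
    exact hmin p (hsub hp)
  · rintro _ ⟨p, hp, rfl⟩
    exact hmin p hp
end

section
/- Assume 2β + Δ > 0 and set e = (α² + β²)/(2β + Δ). Assume l2 ≤ e, e + Δ < l1, l1 − Δ ≤ u2, and (2β + l1)² ≥ 4(α² + β²), and set yI = (2β + l1 − √((2β + l1)² − 4(α² + β²)))/2; assume l2 ≤ yI. Then: (i) the minimum of x − y over P_SOCP equals Δ and is attained at (l1, l1 − Δ); (ii) (l1, yI) is the unique minimizer of x − y over P_OPF, with optimal value l1 − yI, and l1 − yI > Δ; (iii) consequently, for the linear production cost −G(x − y) − Gβ + Bα with G < 0, the optimality gap between the OPF optimum and the SOCP relaxation optimum equals −G·((l1 − Δ) − yI), which is strictly positive; i.e., the SOCP relaxation is inexact with finite optimality gap (Theorem 1,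 case 2). -/
/-- Theorem 1, case 2: the SOCP relaxation is inexact with a finite, strictly
positive optimality gap `-G·((l1 - Δ) - yI)`. The SOCP optimum is `Δ`,
attained at `(l1, l1 - Δ)`, while `(l1, yI)` is the unique OPF minimizer with
value `l1 - yI > Δ`. -/
theorem socp_inexact_finite_gap
    (G B α β Δ l1 u1 l2 u2 : ℝ)
    (hG : G < 0) (hB : 0 < B)
    (hαβ : 0 < α ^ 2 + β ^ 2)
    (hl1 : 0 < l1) (hu1 : l1 ≤ u1) (hl2 : 0 < l2) (hu2 : l2 ≤ u2)
    (hΔ : 0 < 2 * β + Δ)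
    (e : ℝ) (he : e = (α ^ 2 + β ^ 2) / (2 * β + Δ))
    (h1 : l2 ≤ e) (h2 : e + Δ < l1) (h3 : l1 - Δ ≤ u2)
    (h4 : 4 * (α ^ 2 + β ^ 2) ≤ (2 * β + l1) ^ 2)
    (yI : ℝ)
    (hyI : yI = (2 * β + l1 -
             Real.sqrt ((2 * β + l1) ^ 2 - 4 * (α ^ 2 + β ^ 2))) / 2)
    (h5 : l2 ≤ yI) :
    ((l1, l1 - Δ) ∈ PSOCP α β l1 u1 l2 u2 Δ ∧
     IsLeast ((fun p : ℝ × ℝ => p.1 - p.2) '' PSOCP α β l1 u1 l2 u2 Δ) Δ ∧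
     l1 - (l1 - Δ) = Δ) ∧
    ((l1, yI) ∈ POPF α β l1 u1 l2 u2 Δ ∧
     (∀ p ∈ POPF α β l1 u1 l2 u2 Δ, l1 - yI ≤ p.1 - p.2) ∧
     (∀ p ∈ POPF α β l1 u1 l2 u2 Δ, p.1 - p.2 = l1 - yI → p = (l1, yI)) ∧
     Δ < l1 - yI) ∧
    ((-G * (l1 - yI) - G * β + B * α) - (-G * Δ - G * β + B * α) =
        -G * ((l1 - Δ) - yI) ∧
     0 < -G * ((l1 - Δ) - yI)) := by
  have hy0 : 0 < yI := hl2.trans_le h5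
  have he0 : 0 < e := hl2.trans_le h1
  have heS : e * (2 * β + Δ) = α ^ 2 + β ^ 2 := by
    rw [he, div_mul_cancel₀ _ (ne_of_gt hΔ)]
  -- `yJ` is the larger root, characterized with `yI` by Vieta's formulas.
  obtain ⟨yJ, hIJ, hsum, hprod⟩ :
      ∃ yJ, yI ≤ yJ ∧ yI + yJ = 2 * β + l1 ∧ yI * yJ = α ^ 2 + β ^ 2 := by
    have hr := Real.sqrt_nonneg ((2 * β + l1) ^ 2 - 4 * (α ^ 2 + β ^ 2))
    have hsq := Real.sq_sqrt (sub_nonneg.mpr h4)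
    set r := Real.sqrt ((2 * β + l1) ^ 2 - 4 * (α ^ 2 + β ^ 2))
    refine ⟨(2 * β + l1 + r) / 2, by linarith, by linarith, ?_⟩
    rw [hyI]; linear_combination -hsq / 4
  have hquad : (e - yI) * (yJ - e) = e * (l1 - (e + Δ)) := by
    linear_combination e * hsum - hprod + heS
  have hquad_pos : 0 < (e - yI) * (yJ - e) := by
    rw [hquad]; exact mul_pos he0 (by linarith)
  have hIe : yI < e := by
    by_contra! h
    nlinarith [mul_nonneg (sub_nonneg.mpr h) (sub_nonneg.mpr (h.trans hIJ))]
  have heJ : e < yJ := by nlinarith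
  have hgap : Δ < l1 - yI := by linarith
  have hSOCP : (l1, l1 - Δ) ∈ PSOCP α β l1 u1 l2 u2 Δ := by
    have hd : (α ^ 2 + β ^ 2) / (l1 - Δ) ≤ 2 * β + Δ := by
      rw [div_le_iff₀ (by linarith), ← heS]
      nlinarith
    refine ⟨le_rfl, hu1, ?_, h3, ?_, ?_⟩ <;> simp only [hyp] <;> linarith
  have hOPF : (l1, yI) ∈ POPF α β l1 u1 l2 u2 Δ := by
    have hd : (α ^ 2 + β ^ 2) / yI = yJ := by
      rw [← hprod]; field_simp
    refine ⟨le_rfl, hu1, h5, ?_, hgap.le, ?_⟩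
    · simp only; linarith
    · simp only [hyp, hd]; linarith
  have hle : ∀ p ∈ POPF α β l1 u1 l2 u2 Δ, p.2 ≤ yI := by
    rintro ⟨x, y⟩ ⟨hx, -, hy, -, hxy, hh⟩
    simp only [hyp] at hx hy hxy hh ⊢
    have hypos : 0 < y := hl2.trans_le hy
    have hd : (α ^ 2 + β ^ 2) / y * y = α ^ 2 + β ^ 2 := by field_simp
    have hye : y ≤ e := by
      have : (2 * β + Δ) * y ≤ (α ^ 2 + β ^ 2) / y * y :=
        mul_le_mul_of_nonneg_right (by linarith) hypos.le
      rw [hd, ← heS] at this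
      nlinarith
    have hq : 0 ≤ (yI - y) * (yJ - y) := by
      have : (yI - y) * (yJ - y) = (x - l1) * y := by
        rw [hh]; linear_combination hprod - y * hsum - hd
      rw [this]; exact mul_nonneg (by linarith) hypos.le
    by_contra! h
    nlinarith [mul_pos (sub_pos.mpr h) (sub_pos.mpr (hye.trans_lt heJ))]
  -- Along the hyperbola `x - y` is `S / y - 2β`, and at `yI` it equals `l1 - yI`.
  have hval : ∀ p ∈ POPF α β l1 u1 l2 u2 Δ,
      p.1 - p.2 = (α ^ 2 + β ^ 2) / p.2 - 2 * β := by
    intro p hp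
    rw [hp.2.2.2.2.2, hyp]; ring
  have hvalI : l1 - yI = (α ^ 2 + β ^ 2) / yI - 2 * β := hval _ hOPF
  refine ⟨⟨hSOCP, ⟨⟨_, hSOCP, by simp⟩, ?_⟩, by ring⟩, ⟨hOPF, ?_, ?_, hgap⟩, by ring, ?_⟩
  · rintro _ ⟨p, hp, rfl⟩
    exact hp.2.2.2.2.1
  · intro p hp
    rw [hval p hp, hvalI]
    have := div_le_div_of_nonneg_left hαβ.le (hl2.trans_le hp.2.2.1) (hle p hp)
    linarith
  · intro p hp heq
    have hp0 : 0 < p.2 := hl2.trans_le hp.2.2.1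
    have hy : p.2 = yI := by
      rw [hval p hp, hvalI, sub_left_inj, div_eq_div_iff hp0.ne' hy0.ne'] at heq
      exact (mul_left_cancel₀ hαβ.ne' heq).symm
    exact Prod.ext (by simp only; linarith) hy
  · exact mul_pos (by linarith) (by linarith)
end

section
/- Assume 2β + Δ > 0 and e = (α² + β²)/(2β + Δ) < l2, and assume max{l1, l2 + Δ} ≤ u1. Then P_OPF is empty while P_SOCP is nonempty; in particular the point (max{l1, l2 + Δ}, l2) belongs to P_SOCP. That is, the SOCP relaxation is feasible while the OPF problem is infeasible (Theorem 1, case 3, first alternative). -/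
/-- To the right of `e = (α² + β²)/(2β + Δ)`, the hyperbola lies strictly below `x = y + Δ`. -/
theorem hyp_lt_add {α β Δ y : ℝ} (hy : 0 < y) (hΔ : 0 < 2 * β + Δ)
    (he : (α ^ 2 + β ^ 2) / (2 * β + Δ) < y) : hyp α β y < y + Δ := by
  have h : (α ^ 2 + β ^ 2) / y < 2 * β + Δ := (div_lt_comm₀ hΔ hy).1 he
  unfold hyp
  linarith

/-- Theorem 1, case 3, first alternative: if `e = (α² + β²)/(2β + Δ) < l2` and
`max{l1, l2 + Δ} ≤ u1`, then the OPF problem is infeasible while the SOCP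
relaxation is feasible, containing the point `(max{l1, l2 + Δ}, l2)`. -/
theorem socp_feasible_opf_infeasible_first
    (α β Δ l1 u1 l2 u2 : ℝ)
    (hαβ : 0 < α ^ 2 + β ^ 2)
    (hl1 : 0 < l1) (hu1 : l1 ≤ u1) (hl2 : 0 < l2) (hu2 : l2 ≤ u2)
    (hΔ : 0 < 2 * β + Δ)
    (e : ℝ) (he : e = (α ^ 2 + β ^ 2) / (2 * β + Δ))
    (hel2 : e < l2)
    (hmax : max l1 (l2 + Δ) ≤ u1) :
    POPF α β l1 u1 l2 u2 Δ = ∅ ∧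
    (max l1 (l2 + Δ), l2) ∈ PSOCP α β l1 u1 l2 u2 Δ ∧
    (PSOCP α β l1 u1 l2 u2 Δ).Nonempty := by
  subst he
  have hmem : (max l1 (l2 + Δ), l2) ∈ PSOCP α β l1 u1 l2 u2 Δ := by
    have h := hyp_lt_add hl2 hΔ hel2
    have hm := le_max_right l1 (l2 + Δ)
    refine ⟨le_max_left _ _, hmax, le_rfl, hu2, ?_, ?_⟩ <;> dsimp only <;> linarith
  refine ⟨Set.eq_empty_iff_forall_notMem.2 ?_, hmem, _, hmem⟩
  rintro ⟨x, y⟩ ⟨-, -, hy, -, hxy, hx⟩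
  dsimp only at hy hxy hx
  have h := hyp_lt_add (hl2.trans_le hy) hΔ (hel2.trans_le hy)
  linarith
end

section
/- Assume 2β + Δ > 0 and set e = (α² + β²)/(2β + Δ). Assume l2 ≤ e, e + Δ < l1, l1 − Δ ≤ u2, and (2β + l1)² ≥ 4(α² + β²), and set yI = (2β + l1 − √((2β + l1)² − 4(α² + β²)))/2; assume yI < l2. Then P_OPF is empty, while P_SOCP is nonempty and the minimum of x − y over P_SOCP equals Δ, attained at (l1, l1 − Δ). That is, the SOCP relaxation is feasible while the OPF problem is infeasible (Theorem 1, case 3, second alternative). -/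
/-- Theorem 1, case 3, second alternative: if `yI < l2`, the OPF problem is
infeasible while the SOCP relaxation is feasible with minimum `Δ` attained at
`(l1, l1 - Δ)`. -/
theorem socp_feasible_opf_infeasible_second
    (α β Δ l1 u1 l2 u2 : ℝ)
    (hαβ : 0 < α ^ 2 + β ^ 2)
    (hl1 : 0 < l1) (hu1 : l1 ≤ u1) (hl2 : 0 < l2) (hu2 : l2 ≤ u2)
    (hΔ : 0 < 2 * β + Δ)
    (e : ℝ) (he : e = (α ^ 2 + β ^ 2) / (2 * β + Δ))
    (h1 : l2 ≤ e) (h2 : e + Δ < l1) (h3 : l1 - Δ ≤ u2)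
    (h4 : 4 * (α ^ 2 + β ^ 2) ≤ (2 * β + l1) ^ 2)
    (yI : ℝ)
    (hyI : yI = (2 * β + l1 -
             Real.sqrt ((2 * β + l1) ^ 2 - 4 * (α ^ 2 + β ^ 2))) / 2)
    (h5 : yI < l2) :
    POPF α β l1 u1 l2 u2 Δ = ∅ ∧
    (PSOCP α β l1 u1 l2 u2 Δ).Nonempty ∧
    (l1, l1 - Δ) ∈ PSOCP α β l1 u1 l2 u2 Δ ∧
    IsLeast ((fun p : ℝ × ℝ => p.1 - p.2) '' PSOCP α β l1 u1 l2 u2 Δ) Δ ∧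
    l1 - (l1 - Δ) = Δ := by
  have hC : α ^ 2 + β ^ 2 = e * (2 * β + Δ) := by
    rw [he, div_mul_cancel₀ _ hΔ.ne']
  have hmem : (l1, l1 - Δ) ∈ PSOCP α β l1 u1 l2 u2 Δ := by
    have hpos : 0 < l1 - Δ := by linarith
    have hdiv : (α ^ 2 + β ^ 2) / (l1 - Δ) ≤ 2 * β + Δ := by
      rw [div_le_iff₀ hpos, hC]
      nlinarith
    refine ⟨le_rfl, hu1, ?_, h3, ?_, ?_⟩
    · change l2 ≤ l1 - Δ
      linarith
    · change l1 - (l1 - Δ) ≥ Δ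
      linarith
    · change l1 ≥ l1 - Δ - 2 * β + (α ^ 2 + β ^ 2) / (l1 - Δ)
      linarith
  refine ⟨?_, ⟨_, hmem⟩, hmem, ⟨⟨_, hmem, by simp⟩, ?_⟩, by ring⟩
  · rw [Set.eq_empty_iff_forall_notMem]
    rintro ⟨x, y⟩ ⟨hx, -, hy, -, hxy, hh⟩
    simp only [hyp] at hx hy hxy hh
    have hy0 : 0 < y := by linarith
    have hye : y ≤ e := by
      have hd : 2 * β + Δ ≤ (α ^ 2 + β ^ 2) / y := by linarith
      rw [le_div_iff₀ hy0, hC, mul_comm] at hd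
      exact le_of_mul_le_mul_right hd hΔ
    have hmul : y * x = y ^ 2 - 2 * β * y + (α ^ 2 + β ^ 2) := by
      rw [hh]
      field_simp
    have hs0 := Real.sqrt_nonneg ((2 * β + l1) ^ 2 - 4 * (α ^ 2 + β ^ 2))
    have hs := Real.sq_sqrt (sub_nonneg.mpr h4)
    set s := Real.sqrt ((2 * β + l1) ^ 2 - 4 * (α ^ 2 + β ^ 2))
    -- `yI + s` is the larger root `yJ`.
    have hfac : ∀ t : ℝ, (t - yI) * (t - (yI + s)) =
        t ^ 2 - (2 * β + l1) * t + (α ^ 2 + β ^ 2) := by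
      intro t
      rw [hyI]
      linear_combination (-1 / 4) * hs
    have hyJ : 0 ≤ y - (yI + s) := by
      refine nonneg_of_mul_nonneg_right (a := y - yI) ?_ (by linarith)
      rw [hfac]
      nlinarith [mul_le_mul_of_nonneg_left hx hy0.le]
    have hE : 0 ≤ (e - yI) * (e - (yI + s)) :=
      mul_nonneg (by linarith) (by linarith)
    rw [hfac, hC] at hE
    nlinarith [mul_pos (hl2.trans_le h1) (sub_pos.mpr h2)]
  · rintro _ ⟨p, ⟨-, -, -, -, hp, -⟩, rfl⟩
    exact hp
end

section
/- Suppose cl² + sl² < R² and cl² + su² < R² (Case 1 of Algorithm 1). Set x1 = √(R² − su²), y1 = su, x2 = √(R² − sl²), y2 = sl. Then every (c, s) in the box [cl, cu] × [sl, su] with c² + s² ≥ R² satisfies (y1 − y2)·c − (x1 − x2)·s ≥ x2·y1 − x1·y2; i.e., the generated inequality is valid. -/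
/-! The inequality rearranges to
`(su - s) * x2 + (s - sl) * x1 ≤ (su - sl) * c`: the point `(c, s)` lies to the right of the chord
joining `(x1, su)` and `(x2, sl)`. By concavity of `s ↦ √(R² - s²)` the chord lies to the left
of the arc, and `c ≥ √(R² - s²)` because `c > 0`. Both sides of the rearranged inequality are
compared through their squares, which turns concavity into a polynomial identity. -/

/-- Case 1 of Algorithm 1: the generated inequality is valid, i.e. it is
satisfied by every `(c, s)` in the box `[cl, cu] × [sl, su]` lying outside the
open disc of radius `R`. -/
theorem valid_inequality_case1
    (R cl cu sl su : ℝ)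
    (hR : 0 < R) (hcl : 0 < cl) (hclcu : cl ≤ cu) (hslsu : sl ≤ su)
    (hclR : cl < R)
    (hcase1 : cl ^ 2 + sl ^ 2 < R ^ 2)
    (hcase2 : cl ^ 2 + su ^ 2 < R ^ 2)
    (x1 y1 x2 y2 : ℝ)
    (hx1 : x1 = Real.sqrt (R ^ 2 - su ^ 2)) (hy1 : y1 = su)
    (hx2 : x2 = Real.sqrt (R ^ 2 - sl ^ 2)) (hy2 : y2 = sl) :
    ∀ c s : ℝ, cl ≤ c → c ≤ cu → sl ≤ s → s ≤ su →
      R ^ 2 ≤ c ^ 2 + s ^ 2 →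
      (y1 - y2) * c - (x1 - x2) * s ≥ x2 * y1 - x1 * y2 := by
  intro c s hc _ hs1 hs2 hcs
  have hx1sq : x1 ^ 2 = R ^ 2 - su ^ 2 := by
    rw [hx1]; exact Real.sq_sqrt (by nlinarith)
  have hx2sq : x2 ^ 2 = R ^ 2 - sl ^ 2 := by
    rw [hx2]; exact Real.sq_sqrt (by nlinarith)
  subst hy1 hy2
  have ha : 0 ≤ y1 - s := sub_nonneg.2 hs2
  have hb : 0 ≤ s - y2 := sub_nonneg.2 hs1
  have hab : 0 ≤ (y1 - s) * (s - y2) := mul_nonneg ha hb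
  have hd : 0 ≤ y1 - y2 := sub_nonneg.2 hslsu
  -- The defect in the convexity inequality for the square is a multiple of `(x1 - x2) ^ 2`;
  -- substituting the values of `x1 ^ 2` and `x2 ^ 2` gives the chord-below-arc identity.
  have key : ((y1 - s) * x2 + (s - y2) * x1) ^ 2
      = (y1 - y2) ^ 2 * (R ^ 2 - s ^ 2)
        - (y1 - y2) ^ 2 * ((y1 - s) * (s - y2))
        - (y1 - s) * (s - y2) * (x1 - x2) ^ 2 := by
    linear_combination (y1 - y2) * (y1 - s) * hx2sq + (y1 - y2) * (s - y2) * hx1sq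
  have hle : ((y1 - s) * x2 + (s - y2) * x1) ^ 2 ≤ ((y1 - y2) * c) ^ 2 := by
    have h1 : (y1 - y2) ^ 2 * (R ^ 2 - s ^ 2) ≤ (y1 - y2) ^ 2 * c ^ 2 :=
      mul_le_mul_of_nonneg_left (by linarith) (sq_nonneg _)
    have h2 := mul_nonneg (sq_nonneg (y1 - y2)) hab
    have h3 := mul_nonneg hab (sq_nonneg (x1 - x2))
    rw [key, mul_pow]
    linarith
  have hfin := (abs_le_of_sq_le_sq' hle (mul_nonneg hd (hcl.le.trans hc))).2
  linarith
end

section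
/- Suppose cl² + sl² < R² and cl² + su² ≥ R² (Case 2 of Algorithm 1). Set x1 = cl, y1 = √(R² − cl²), x2 = √(R² − sl²), y2 = sl. Then every (c, s) in the box [cl, cu] × [sl, su] with c² + s² ≥ R² satisfies (y1 − y2)·c − (x1 − x2)·s ≥ x2·y1 − x1·y2; i.e., the generated inequality is valid. -/
/-!
The line through `(x1, y1)` and `(x2, y2)` cuts off the triangle with vertices `(x1, y2)`,
`(x1, y1)`, `(x2, y2)`. The first vertex lies strictly inside the disc of radius `R` and the other
two on its boundary circle, so by convexity a point of the triangle off the chord lies strictly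
inside the disc. A point of the box violating the inequality would be such a point.
-/

/-- Case 2 of Algorithm 1: the generated inequality is valid, i.e. it is
satisfied by every `(c, s)` in the box `[cl, cu] × [sl, su]` lying outside the
open disc of radius `R`. -/
theorem valid_inequality_case2
    (R cl cu sl su : ℝ)
    (hR : 0 < R) (hcl : 0 < cl) (hclcu : cl ≤ cu) (hslsu : sl ≤ su)
    (hclR : cl < R)
    (hcase1 : cl ^ 2 + sl ^ 2 < R ^ 2)
    (hcase2 : R ^ 2 ≤ cl ^ 2 + su ^ 2)
    (x1 y1 x2 y2 : ℝ)
    (hx1 : x1 = cl) (hy1 : y1 = Real.sqrt (R ^ 2 - cl ^ 2))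
    (hx2 : x2 = Real.sqrt (R ^ 2 - sl ^ 2)) (hy2 : y2 = sl) :
    ∀ c s : ℝ, cl ≤ c → c ≤ cu → sl ≤ s → s ≤ su →
      R ^ 2 ≤ c ^ 2 + s ^ 2 →
      (y1 - y2) * c - (x1 - x2) * s ≥ x2 * y1 - x1 * y2 := by
  intro c s hc _ hs _ hcs
  have hy1sq : y1 ^ 2 = R ^ 2 - cl ^ 2 := by
    rw [hy1]; exact Real.sq_sqrt (by nlinarith)
  have hx2sq : x2 ^ 2 = R ^ 2 - sl ^ 2 := by
    rw [hx2]; exact Real.sq_sqrt (by nlinarith)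
  have hb : sl < y1 := by
    rw [hy1]; exact Real.lt_sqrt_of_sq_lt (by linarith)
  have ha : cl < x2 := by
    rw [hx2]; exact Real.lt_sqrt_of_sq_lt (by linarith)
  subst hx1 hy2
  by_contra! hlt
  -- Coordinates relative to the corner `(x1, y2)`; the legs of the triangle are `a` and `b`.
  obtain ⟨a, rfl⟩ : ∃ a, x2 = x1 + a := ⟨x2 - x1, by ring⟩
  obtain ⟨b, rfl⟩ : ∃ b, y1 = y2 + b := ⟨y1 - y2, by ring⟩
  obtain ⟨u, rfl⟩ : ∃ u, c = x1 + u := ⟨c - x1, by ring⟩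
  obtain ⟨v, rfl⟩ : ∃ v, s = y2 + v := ⟨s - y2, by ring⟩
  have ha' : 0 < a := by linarith
  have hb' : 0 < b := by linarith
  have hu : 0 ≤ u := by linarith
  have hv : 0 ≤ v := by linarith
  have hab : b * u + a * v < a * b := by linarith
  have hua : u ≤ a := by nlinarith [mul_nonneg ha'.le hv]
  have hvb : v ≤ b := by nlinarith [mul_nonneg hb'.le hu]
  -- `D` is minus the power of the corner with respect to the circle.
  obtain ⟨D, hD⟩ : ∃ D, D = R ^ 2 - x1 ^ 2 - y2 ^ 2 := ⟨_, rfl⟩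
  have hDpos : 0 < D := by linarith
  have hDa : a * (2 * x1 + a) = D := by linarith
  have hDb : b * (2 * y2 + b) = D := by linarith
  have hq : D ≤ u * (2 * x1 + a) + v * (2 * y2 + b) := by
    linarith [mul_le_mul_of_nonneg_left hua hu, mul_le_mul_of_nonneg_left hvb hv]
  have hscaled : a * b * (u * (2 * x1 + a) + v * (2 * y2 + b)) = (b * u + a * v) * D := by
    linear_combination b * u * hDa + a * v * hDb
  have h1 := mul_le_mul_of_nonneg_left hq (mul_pos ha' hb').le
  have h2 := mul_lt_mul_of_pos_right hab hDpos
  linarith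
end

section
/- Suppose cl² + sl² ≥ R² and cl² + su² < R² (Case 3 of Algorithm 1). Set x1 = √(R² − su²), y1 = su, x2 = cl, y2 = −√(R² − cl²). Then every (c, s) in the box [cl, cu] × [sl, su] with c² + s² ≥ R² satisfies (y1 − y2)·c − (x1 − x2)·s ≥ x2·y1 − x1·y2; i.e., the generated inequality is valid. -/
/-!
The points `P₁ = (x1, y1)` and `P₂ = (x2, y2)` lie on the circle of radius `R`, with `x2 < x1` and
`y2 < y1`, and the inequality says that `(c, s)` is not to the left of the line `P₁P₂`. For
`s ≤ y2` this is immediate from `x2 ≤ c`. For `y2 < s ≤ y1` the point of the line at height `s`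
lies on the chord, hence in the closed disc by convexity; a point at the same height strictly to
its left, with positive abscissa, would lie in the open disc.
-/

/-- Case 3 of Algorithm 1: the generated inequality is valid, i.e. it is
satisfied by every `(c, s)` in the box `[cl, cu] × [sl, su]` lying outside the
open disc of radius `R`. -/
theorem valid_inequality_case3
    (R cl cu sl su : ℝ)
    (hR : 0 < R) (hcl : 0 < cl) (hclcu : cl ≤ cu) (hslsu : sl ≤ su)
    (hclR : cl < R)
    (hcase1 : R ^ 2 ≤ cl ^ 2 + sl ^ 2)
    (hcase2 : cl ^ 2 + su ^ 2 < R ^ 2)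
    (x1 y1 x2 y2 : ℝ)
    (hx1 : x1 = Real.sqrt (R ^ 2 - su ^ 2)) (hy1 : y1 = su)
    (hx2 : x2 = cl) (hy2 : y2 = -Real.sqrt (R ^ 2 - cl ^ 2)) :
    ∀ c s : ℝ, cl ≤ c → c ≤ cu → sl ≤ s → s ≤ su →
      R ^ 2 ≤ c ^ 2 + s ^ 2 →
      (y1 - y2) * c - (x1 - x2) * s ≥ x2 * y1 - x1 * y2 := by
  intro c s hc _ _ hs hcs
  have hx1sq : x1 ^ 2 = R ^ 2 - su ^ 2 := by
    rw [hx1, Real.sq_sqrt (by nlinarith)]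
  have hy2sq : y2 ^ 2 = R ^ 2 - cl ^ 2 := by
    rw [hy2, neg_sq, Real.sq_sqrt (by nlinarith)]
  have hx1nn : 0 ≤ x1 := hx1 ▸ Real.sqrt_nonneg _
  have hy2np : y2 ≤ 0 := by
    rw [hy2]; exact neg_nonpos.mpr (Real.sqrt_nonneg _)
  subst y1 x2
  have hx : cl < x1 := by
    apply lt_of_pow_lt_pow_left₀ 2 hx1nn
    linarith
  have hy : y2 < su := by
    by_contra! h
    nlinarith
  suffices h : 0 ≤ (su - y2) * (c - cl) - (x1 - cl) * (s - y2) by linarith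
  rcases le_or_gt s y2 with hsy | hsy
  · have h1 := mul_nonneg (sub_nonneg.mpr hy.le) (sub_nonneg.mpr hc)
    have h2 := mul_nonneg (sub_nonneg.mpr hx.le) (sub_nonneg.mpr hsy)
    linarith
  by_contra! hneg
  -- `(cl + t * (x1 - cl), s)` is the point of the chord at height `s`.
  obtain ⟨t, ht⟩ : ∃ t, t = (s - y2) / (su - y2) := ⟨_, rfl⟩
  have hd : 0 < su - y2 := sub_pos.mpr hy
  have ht0 : 0 ≤ t := ht ▸ div_nonneg (sub_pos.mpr hsy).le hd.le
  have ht1 : t ≤ 1 := by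
    rw [ht, div_le_one hd]; linarith
  have hst : s - y2 = t * (su - y2) := by
    rw [ht]; field_simp
  have hlt : c < cl + t * (x1 - cl) := by
    rw [hst] at hneg
    have : (su - y2) * (c - cl - t * (x1 - cl)) < 0 := by linarith
    linarith [neg_of_mul_neg_right this hd.le]
  have hs' : s = y2 + t * (su - y2) := by linarith
  have hchord : (cl + t * (x1 - cl)) ^ 2 + s ^ 2 ≤ R ^ 2 := by
    have hid : (cl + t * (x1 - cl)) ^ 2 + s ^ 2
        = R ^ 2 - t * (1 - t) * ((x1 - cl) ^ 2 + (su - y2) ^ 2) := by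
      rw [hs']
      linear_combination t * hx1sq + (1 - t) * hy2sq
    have : 0 ≤ t * (1 - t) * ((x1 - cl) ^ 2 + (su - y2) ^ 2) :=
      mul_nonneg (mul_nonneg ht0 (sub_nonneg.mpr ht1)) (by positivity)
    linarith
  have hsq : c ^ 2 < (cl + t * (x1 - cl)) ^ 2 :=
    pow_lt_pow_left₀ hlt (hcl.le.trans hc) two_ne_zero
  linarith
end

section
/- There exists a function θ : V → ℝ such that for every edge {i, j} of T, cos(θ(i) − θ(j)) = cE(i, j)/√(c(i)·c(j)) and sin(θ(i) − θ(j)) = sE(i, j)/√(c(i)·c(j)). (This is the key step showing that equations (10)–(11) recovering voltage angles from a solution of the reformulated OPF have a solution whenever the network is radial.) -/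
/-!
On each edge the coupling equation says that `cE i j + sE i j * I` has modulus `√(c i * c j)`, so its
argument is an angle difference with the required cosine and sine. On a tree, arbitrary prescribed
differences integrate to a potential (`SimpleGraph.IsTree.exists_potential`): fix a root and sum the
differences along the unique path from each vertex to the root. Of two adjacent vertices, one lies
on the path of the other, so their potentials differ by the value prescribed on that edge in one of
its two orientations; symmetry of `cE` and skew-symmetry of `sE` make either orientation sufficient.
-/

/-- The sum of `φ` over the oriented edges traversed by a walk. -/
def SimpleGraph.Walk.edgeSum {V : Type*} {G : SimpleGraph V} (φ : V → V → ℝ) :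
    {u v : V} → G.Walk u v → ℝ
  | _, _, .nil => 0
  | u, _, .cons (v := v) _ p => φ u v + edgeSum φ p

/-- In a tree, a function on oriented edges is a difference of vertex potentials, up to the choice
of one orientation of each edge (no antisymmetry of `φ` is assumed). -/
theorem SimpleGraph.IsTree.exists_potential {V : Type*} [Nonempty V] {G : SimpleGraph V}
    (hG : G.IsTree) (φ : V → V → ℝ) :
    ∃ θ : V → ℝ, ∀ i j, G.Adj i j → θ i - θ j = φ i j ∨ θ j - θ i = φ j i := by
  classical
  obtain ⟨r⟩ := ‹Nonempty V›
  choose p hp huniq using fun v => hG.existsUnique_path v r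
  refine ⟨fun v => (p v).edgeSum φ, fun i j hij => ?_⟩
  -- Prepending an edge `a b` to the path from `b` gives the path from `a`, if `a` is not on it.
  have step : ∀ a b, G.Adj a b → a ∉ (p b).support →
      (p a).edgeSum φ - (p b).edgeSum φ = φ a b := by
    intro a b h ha
    rw [← huniq a (.cons h (p b)) ((hp b).cons ha)]
    simp [SimpleGraph.Walk.edgeSum]
  by_cases hi : i ∈ (p j).support
  · refine Or.inr (step j i hij.symm fun hj => ?_)
    have h1 : (p j).dropUntil i hi = p i := huniq i _ ((hp j).dropUntil hi)
    have h2 : (p i).dropUntil j hj = p j := huniq j _ ((hp i).dropUntil hj)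
    -- Each path would be a suffix of the other, and a proper one since `i ≠ j`.
    have l1 := SimpleGraph.Walk.length_dropUntil_lt_length hi hij.ne
    have l2 := (p i).length_dropUntil_le_length hj
    rw [h1] at l1
    rw [h2] at l2
    omega
  · exact Or.inl (step i j hij hi)

/-- On a radial (tree) network, the angle-recovery equations (10)-(11) have a
solution: there exist voltage angles `θ` such that on every line `{i, j}`,
`cos(θ i - θ j) = cE i j / √(c i · c j)` and
`sin(θ i - θ j) = sE i j / √(c i · c j)`. -/
theorem angle_recovery_exists
    {V : Type*} [Fintype V] [Nonempty V]
    (T : SimpleGraph V) (hT : T.IsTree)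
    (c : V → ℝ) (hc : ∀ i, 0 < c i)
    (cE sE : V → V → ℝ)
    (hsym : ∀ i j, T.Adj i j → cE i j = cE j i)
    (hskew : ∀ i j, T.Adj i j → sE i j = -sE j i)
    (hcoup : ∀ i j, T.Adj i j → cE i j ^ 2 + sE i j ^ 2 = c i * c j) :
    ∃ θ : V → ℝ, ∀ i j, T.Adj i j →
      Real.cos (θ i - θ j) = cE i j / Real.sqrt (c i * c j) ∧
      Real.sin (θ i - θ j) = sE i j / Real.sqrt (c i * c j) := by
  obtain ⟨θ, hθ⟩ := hT.exists_potential fun i j => Complex.arg ⟨cE i j, sE i j⟩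
  have key : ∀ i j, T.Adj i j → θ i - θ j = Complex.arg ⟨cE i j, sE i j⟩ →
      Real.cos (θ i - θ j) = cE i j / Real.sqrt (c i * c j) ∧
      Real.sin (θ i - θ j) = sE i j / Real.sqrt (c i * c j) := by
    intro i j h e
    have hn : ‖(⟨cE i j, sE i j⟩ : ℂ)‖ = Real.sqrt (c i * c j) := by
      rw [Complex.norm_eq_sqrt_sq_add_sq, hcoup i j h]
    have h0 : (⟨cE i j, sE i j⟩ : ℂ) ≠ 0 := by
      rw [← norm_pos_iff, hn]
      exact Real.sqrt_pos.2 (mul_pos (hc i) (hc j))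
    rw [e, Complex.cos_arg h0, Complex.sin_arg, hn]
    exact ⟨rfl, rfl⟩
  refine ⟨θ, fun i j h => ?_⟩
  rcases hθ i j h with e | e
  · exact key i j h e
  · obtain ⟨h1, h2⟩ := key j i h.symm e
    rw [← neg_sub, Real.cos_neg, Real.sin_neg, h1, h2, hsym i j h, hskew i j h,
      mul_comm (c j), neg_div]
    exact ⟨rfl, rfl⟩
end

section
/- There exist functions e, f : V → ℝ such that e(i)² + f(i)² = c(i) for every vertex i, and for every edge {i, j} of T, e(i)·e(j) + f(i)·f(j) = cE(i, j) and e(i)·f(j) − e(j)·f(i) = sE(i, j). (This shows that the variable change c_ii = e_i² + f_i², c_ij = e_i e_j + f_i f_j, s_ij = e_i f_j − e_j f_i is an exact reformulation of OPF over radial networks: any solution of the reformulated problem yields rectangular voltage variables.) -/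
/-!
Writing `z i = e i + f i * I`, the edge equations say `conj (z i) * z j = cE i j + sE i j * I`,
so `z j` determines `z i` for every neighbour `i` of `j`, and the coupling equation makes
`|z j|² = c j` propagate to `|z i|² = c i`. Root the tree at `r`, put `z r = √(c r)`, and obtain
`z v` by propagating along the unique path from `v` to `r`. For an edge `{i, j}`, one of the two
paths to the root extends the other by this edge (`adj_path_cases`), so the edge equation holds in
one orientation; the (skew-)symmetry of `cE` and `sE` gives the other.
-/

/-- Value at the start of a walk obtained from the value `a` at its end by applying, for each
step `v ~ u` of the walk, the rule `g v u` that turns a value at `u` into a value at `v`. -/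
def propagate {V A : Type*} {T : SimpleGraph V} (g : V → V → A → A) {r : V} (a : A) :
    {v : V} → T.Walk v r → A
  | _, .nil => a
  | _, .cons (u := v) (v := u) _ p => g v u (propagate g a p)

lemma adj_path_cases {V : Type*} {T : SimpleGraph V} (hT : T.IsAcyclic) {i j r : V}
    (h : T.Adj i j) {p : T.Walk i r} {q : T.Walk j r} (hp : p.IsPath) (hq : q.IsPath) :
    p = .cons h q ∨ q = .cons h.symm p := by
  have uniq : ∀ {v w : V} {p q : T.Walk v w}, p.IsPath → q.IsPath → p = q :=
    fun hp hq => congrArg Subtype.val ((hT.subsingleton_path _ _).elim ⟨_, hp⟩ ⟨_, hq⟩)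
  by_cases hi : i ∈ q.support
  · right
    obtain rfl := hT.eq_snd_of_adj_start hq h.symm hi
    have hn : ¬ q.Nil := by
      intro hn
      cases q with
      | nil => exact h.ne rfl
      | cons _ _ => exact SimpleGraph.Walk.not_nil_cons hn
    rw [uniq hp hq.tail]
    exact (q.cons_tail_eq hn).symm
  · exact .inl (uniq hp (hq.cons hi))

/-- On a radial (tree) network, the change of variables
`c_ii = e_i² + f_i²`, `c_ij = e_i·e_j + f_i·f_j`, `s_ij = e_i·f_j - e_j·f_i`
is an exact reformulation: any solution of the reformulated problem yields
rectangular voltage variables `e, f`. -/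
theorem rectangular_voltage_recovery_exists
    {V : Type*} [Fintype V] [Nonempty V]
    (T : SimpleGraph V) (hT : T.IsTree)
    (c : V → ℝ) (hc : ∀ i, 0 < c i)
    (cE sE : V → V → ℝ)
    (hsym : ∀ i j, T.Adj i j → cE i j = cE j i)
    (hskew : ∀ i j, T.Adj i j → sE i j = -sE j i)
    (hcoup : ∀ i j, T.Adj i j → cE i j ^ 2 + sE i j ^ 2 = c i * c j) :
    ∃ e f : V → ℝ,
      (∀ i, e i ^ 2 + f i ^ 2 = c i) ∧
      ∀ i j, T.Adj i j →
        e i * e j + f i * f j = cE i j ∧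
        e i * f j - e j * f i = sE i j := by
  classical
  obtain ⟨r⟩ := ‹Nonempty V›
  -- Given `z = (e j, f j)`, solve the edge equations for `(e i, f i)`.
  let g : V → V → ℝ × ℝ → ℝ × ℝ := fun i j z =>
    ((cE i j * z.1 + sE i j * z.2) / c j, (cE i j * z.2 - sE i j * z.1) / c j)
  have hprop : ∀ {v : V} (p : T.Walk v r),
      (propagate g (√(c r), 0) p).1 ^ 2 + (propagate g (√(c r), 0) p).2 ^ 2 = c v := by
    intro v p
    induction p with
    | nil => simp [propagate, Real.sq_sqrt (hc _).le]
    | @cons i j r h p ih =>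
      have hj := (hc j).ne'
      have hij := hcoup i j h
      simp only [propagate, g]
      generalize propagate _ _ p = z at ih ⊢
      field_simp
      linear_combination (cE i j ^ 2 + sE i j ^ 2) * ih + c j * hij
  choose p hp _ using fun v => hT.existsUnique_path v r
  let z : V → ℝ × ℝ := fun v => propagate g (√(c r), 0) (p v)
  have hz : ∀ v, (z v).1 ^ 2 + (z v).2 ^ 2 = c v := fun v => hprop (p v)
  have key : ∀ i j, z i = g i j (z j) →
      (z i).1 * (z j).1 + (z i).2 * (z j).2 = cE i j ∧
      (z i).1 * (z j).2 - (z j).1 * (z i).2 = sE i j := by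
    intro i j h
    have hj := (hc j).ne'
    have hzj := hz j
    rw [h]
    simp only [g]
    constructor
    · field_simp
      linear_combination cE i j * hzj
    · field_simp
      linear_combination sE i j * hzj
  refine ⟨fun v => (z v).1, fun v => (z v).2, hz, fun i j h => ?_⟩
  rcases adj_path_cases hT.isAcyclic h (hp i) (hp j) with hpath | hpath
  · exact key i j (by simp only [z, hpath, propagate])
  · obtain ⟨h1, h2⟩ := key j i (by simp only [z, hpath, propagate])
    have hs := hsym i j h
    have hk := hskew i j h
    constructor <;> dsimp only <;> linarith
end
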